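/- Let T be a finite tree with at least three vertices and let v be a leaf of T. Then the number of subtrees of T not containing v is at least the number of subtrees of T containing v; equivalently, N(T) ≥ 2·N(T,v), so p(T,v) ≤ 1/2. -/

import Mathlib

/-- A subtree of a graph: a nonempty set of vertices inducing a connected subgraph. -/
def IsSubtree {V : Type*} (G : SimpleGraph V) (S : Finset V) : Prop :=
  S.Nonempty ∧ (G.induce (S : Set V)).Connected

/-- `N(T)`: the number of subtrees. -/
noncomputable def numSubtrees {V : Type*} [Fintype V] (G : SimpleGraph V) : ℕ :=
  Nat.card {S : Finset V // IsSubtree G S}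

/-- `N(T,v)`: the number of subtrees containing the vertex `v`. -/
noncomputable def numSubtreesContaining {V : Type*} [Fintype V] (G : SimpleGraph V) (v : V) : ℕ :=
  Nat.card {S : Finset V // IsSubtree G S ∧ v ∈ S}

/-- `p(T,v) = N(T,v)/N(T)`: the probability that a uniformly random subtree contains `v`. -/
noncomputable def subtreeProb {V : Type*} [Fintype V] (G : SimpleGraph V) (v : V) : ℝ :=
  (numSubtreesContaining G v : ℝ) / (numSubtrees G : ℝ)

/-!
Deleting `v` injects the subtrees that contain the leaf `v`, other than `{v}` itself, into the
subtrees that avoid `v`. A subtree `{v, w}` exists only if `w` is adjacent to `v`, so a third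
vertex `w`, which is not adjacent to `v`, gives a singleton `{w}` outside the image, and this
makes up for the exceptional subtree `{v}`.
-/

section Deletion

variable {V : Type*} {G : SimpleGraph V}

theorem preconnected_induce_sdiff {s t : Set V} (hs : (G.induce s).Preconnected)
    (ht : ∀ v ∈ t, (G.neighborSet v).Subsingleton) : (G.induce (s \ t)).Preconnected := by
  have hleaf : ∀ x ∉ {x : s | x.1 ∉ t}, ((G.induce s).neighborSet x).Subsingleton := by
    intro x hx
    rw [SimpleGraph.neighborSet_induce]
    exact (ht x (not_not.1 hx)).preimage Subtype.val_injective
  let f : (G.induce s).induce {x : s | x.1 ∉ t} →g G.induce (s \ t) :=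
    ⟨fun x ↦ ⟨x.1.1, x.1.2, x.2⟩, fun hxy ↦ hxy⟩
  exact (hs.induce_of_degree_eq_one hleaf).map f fun y ↦ ⟨⟨⟨y.1, y.2.1⟩, y.2.2⟩, rfl⟩

theorem isSubtree_singleton (G : SimpleGraph V) (v : V) : IsSubtree G {v} := by
  refine ⟨Finset.singleton_nonempty v, ?_⟩
  rw [Finset.coe_singleton]
  exact .of_subsingleton

namespace IsSubtree

variable [DecidableEq V] {S : Finset V} {v w : V}

theorem erase (hS : IsSubtree G S) (hv : (G.neighborSet v).Subsingleton) (hSv : S ≠ {v}) :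
    IsSubtree G (S.erase v) := by
  have hne : (S.erase v).Nonempty := by
    rw [Finset.nonempty_iff_ne_empty, Ne, Finset.erase_eq_empty_iff]
    exact not_or.2 ⟨hS.1.ne_empty, hSv⟩
  refine ⟨hne, (SimpleGraph.connected_iff _).2 ⟨?_, hne.to_subtype⟩⟩
  rw [Finset.coe_erase]
  exact preconnected_induce_sdiff hS.2.preconnected fun _ hx ↦ hx ▸ hv

theorem adj_of_erase_eq_singleton (hS : IsSubtree G S) (hvS : v ∈ S) (h : S.erase v = {w}) :
    G.Adj v w := by
  have hw : w ∈ S.erase v := h ▸ Finset.mem_singleton_self w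
  obtain ⟨hwv, hwS⟩ := Finset.mem_erase.1 hw
  have : Nontrivial (S : Set V) := ⟨⟨w, hwS⟩, ⟨v, hvS⟩, by simpa using hwv⟩
  obtain ⟨u, huv⟩ := hS.2.preconnected.exists_adj_of_nontrivial ⟨v, hvS⟩
  have hvu : G.Adj v u := huv
  have hu : u.1 ∈ S.erase v := Finset.mem_erase.2 ⟨hvu.ne', u.2⟩
  rw [h, Finset.mem_singleton] at hu
  exact hu ▸ hvu

end IsSubtree

end Deletion

section Counting

variable {V : Type*} [Fintype V] (G : SimpleGraph V) (v : V)

theorem numSubtrees_pos [Nonempty V] : 0 < numSubtrees G :=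
  have : Nonempty {S : Finset V // IsSubtree G S} :=
    ‹Nonempty V›.map fun v ↦ ⟨{v}, isSubtree_singleton G v⟩
  Nat.card_pos

theorem numSubtreesContaining_add_card_notMem :
    numSubtreesContaining G v + Nat.card {S : Finset V // IsSubtree G S ∧ v ∉ S} =
      numSubtrees G :=
  Set.ncard_inter_add_ncard_sdiff_eq_ncard {S : Finset V | IsSubtree G S} {S | v ∈ S}

theorem two_mul_numSubtreesContaining_le_iff :
    2 * numSubtreesContaining G v ≤ numSubtrees G ↔
      numSubtreesContaining G v ≤ Nat.card {S : Finset V // IsSubtree G S ∧ v ∉ S} := by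
  rw [← numSubtreesContaining_add_card_notMem G v, two_mul, Nat.add_le_add_iff_left]

theorem subtreeProb_le_one_half_iff :
    subtreeProb G v ≤ 1 / 2 ↔ 2 * numSubtreesContaining G v ≤ numSubtrees G := by
  have : Nonempty V := ⟨v⟩
  have hpos : (0 : ℝ) < numSubtrees G := mod_cast numSubtrees_pos G
  rw [subtreeProb, div_le_div_iff₀ hpos two_pos, one_mul, mul_comm]
  norm_cast

variable {G v}

theorem numSubtreesContaining_le_of_not_adj {w : V} (hv : (G.neighborSet v).Subsingleton)
    (hwv : w ≠ v) (hvw : ¬ G.Adj v w) :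
    numSubtreesContaining G v ≤ Nat.card {S : Finset V // IsSubtree G S ∧ v ∉ S} := by
  classical
  let A : Set (Finset V) := {S | IsSubtree G S ∧ v ∈ S}
  let B : Set (Finset V) := {S | IsSubtree G S ∧ v ∉ S}
  have hvA : {v} ∈ A := ⟨isSubtree_singleton G v, Finset.mem_singleton_self v⟩
  have hwB : {w} ∈ B := ⟨isSubtree_singleton G w, Finset.notMem_singleton.2 hwv.symm⟩
  have hmaps : ∀ S ∈ A \ {{v}}, S.erase v ∈ B \ {{w}} := fun S ⟨⟨hS, hvS⟩, hSv⟩ ↦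
    ⟨⟨hS.erase hv hSv, Finset.notMem_erase v S⟩,
      fun h ↦ hvw (hS.adj_of_erase_eq_singleton hvS h)⟩
  have hinj : (A \ {{v}}).InjOn (Finset.erase · v) :=
    (Finset.erase_injOn' v).mono fun S hS ↦ hS.1.2
  change A.ncard ≤ B.ncard
  rw [← Set.ncard_sdiff_singleton_add_one hvA, ← Set.ncard_sdiff_singleton_add_one hwB]
  exact Nat.add_le_add_right (Set.ncard_le_ncard_of_injOn _ hmaps hinj) 1

theorem exists_ne_and_not_adj (hv : (G.neighborSet v).Subsingleton)
    (h3 : 3 ≤ Fintype.card V) : ∃ w, w ≠ v ∧ ¬ G.Adj v w := by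
  by_contra! h
  have hcompl : ({v}ᶜ : Set V).ncard ≤ 1 := Set.ncard_le_one_iff_subsingleton.2 (hv.anti h)
  have hcard := Set.ncard_add_ncard_compl {v}
  rw [Set.ncard_singleton, Nat.card_eq_fintype_card] at hcard
  omega

end Counting

theorem stmt15_general {V : Type*} [Fintype V] (G : SimpleGraph V)
    (h3 : 3 ≤ Fintype.card V) (v : V) (hv : (G.neighborSet v).Subsingleton) :
    numSubtreesContaining G v ≤ Nat.card {S : Finset V // IsSubtree G S ∧ v ∉ S} ∧
    2 * numSubtreesContaining G v ≤ numSubtrees G ∧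
    subtreeProb G v ≤ 1 / 2 := by
  obtain ⟨w, hwv, hvw⟩ := exists_ne_and_not_adj hv h3
  have hle := numSubtreesContaining_le_of_not_adj hv hwv hvw
  have htwo := (two_mul_numSubtreesContaining_le_iff G v).2 hle
  exact ⟨hle, htwo, (subtreeProb_le_one_half_iff G v).2 htwo⟩

theorem stmt15 {V : Type*} [Fintype V] (G : SimpleGraph V) (hG : G.IsTree)
    (h3 : 3 ≤ Fintype.card V) (v : V) (hv : Nat.card (G.neighborSet v) = 1) :
    numSubtreesContaining G v ≤ Nat.card {S : Finset V // IsSubtree G S ∧ v ∉ S} ∧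
    2 * numSubtreesContaining G v ≤ numSubtrees G ∧
    subtreeProb G v ≤ 1 / 2 :=
  stmt15_general G h3 v (Set.ncard_le_one_iff_subsingleton.1 hv.le)
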